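/- Let M, A ∈ ℕ with M ≥ 1, let f be an (M,A)-quasi-isometry from a connected graph G to a connected graph H, and set r := M²(3A+1) + 2A + M. If X ⊆ V(G) separates Y ⊆ V(G) and Z ⊆ V(G) in G, then B_H(f(X), r) separates f(Y) and f(Z) in H. -/

import Mathlib

open SimpleGraph

namespace CGT

/-- Distance between two vertex sets, as an extended natural number. -/
noncomputable def sDist {V : Type*} (G : SimpleGraph V) (U U' : Set V) : ℕ∞ :=
  ⨅ (u : U) (v : U'), G.edist u.1 v.1

/-- The ball of radius `r` around a vertex set `U`. -/
def gBall {V : Type*} (G : SimpleGraph V) (U : Set V) (r : ℕ) : Set V :=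
  {v | ∃ u ∈ U, G.edist u v ≤ (r : ℕ∞)}

/-- A set of vertices is connected if the induced subgraph is connected. -/
def SetConn {V : Type*} (G : SimpleGraph V) (U : Set V) : Prop :=
  (G.induce U).Connected

/-- The vertex set of a walk. -/
def walkSupp {V : Type*} {G : SimpleGraph V} {a b : V} (p : G.Walk a b) : Set V :=
  {v | v ∈ p.support}

/-- `X` separates `Y` and `Z` in `G`: every path with one end in `Y` and one in `Z`
contains a vertex of `X`. -/
def Separates {V : Type*} (G : SimpleGraph V) (X Y Z : Set V) : Prop :=
  ∀ ⦃y z : V⦄, y ∈ Y → z ∈ Z → ∀ p : G.Walk y z, p.IsPath → ∃ x ∈ X, x ∈ p.support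

/-- `f` is an `(M,A)`-quasi-isometry from `G` to `H`.  The two-sided distance bound
`M⁻¹ d_G(u,v) - A ≤ d_H(f u, f v) ≤ M d_G(u,v) + A` is stated multiplied out over `ℕ∞`. -/
structure IsQI {V V' : Type*} (M A : ℕ) (G : SimpleGraph V) (H : SimpleGraph V')
    (f : V → V') : Prop where
  upper : ∀ u v : V, H.edist (f u) (f v) ≤ (M : ℕ∞) * G.edist u v + (A : ℕ∞)
  lower : ∀ u v : V, G.edist u v ≤ (M : ℕ∞) * H.edist (f u) (f v) + (M : ℕ∞) * (A : ℕ∞)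
  dense : ∀ w : V', ∃ v : V, H.edist w (f v) ≤ (A : ℕ∞)

/-- `G` is `(M,A)`-quasi-isometric to `H`. -/
def QIsometric {V V' : Type*} (M A : ℕ) (G : SimpleGraph V) (H : SimpleGraph V') : Prop :=
  ∃ f : V → V', IsQI M A G H f

/-- `X` is a minor of `G`. -/
def HasMinor {V W : Type*} (G : SimpleGraph V) (X : SimpleGraph W) : Prop :=
  ∃ U : W → Set V,
    (∀ x, (U x).Nonempty) ∧ (∀ x, SetConn G (U x)) ∧
    (∀ ⦃x y⦄, x ≠ y → Disjoint (U x) (U y)) ∧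
    ∀ ⦃x y⦄, X.Adj x y → ∃ u ∈ U x, ∃ v ∈ U y, G.Adj u v

/-- The `(a × b)`-grid graph. -/
def gridGraph (a b : ℕ) : SimpleGraph (Fin a × Fin b) :=
  SimpleGraph.fromRel (fun u v =>
    (u.1 = v.1 ∧ u.2.1 + 1 = v.2.1) ∨ (u.2 = v.2 ∧ u.1.1 + 1 = v.1.1))

/-- A `K`-fat model of `X` in `G`: disjoint connected branch sets joined by internally
disjoint branch paths, all pairwise at distance at least `K` except for a branch path and
the branch sets of its endpoints. -/
structure FatModel {V W : Type*} (G : SimpleGraph V) (X : SimpleGraph W) (K : ℕ) where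
  branch : W → Set V
  branch_nonempty : ∀ x, (branch x).Nonempty
  branch_connected : ∀ x, SetConn G (branch x)
  branch_disjoint : ∀ ⦃x y⦄, x ≠ y → Disjoint (branch x) (branch y)
  pathEnd : ∀ ⦃x y⦄, X.Adj x y → V
  path : ∀ ⦃x y⦄ (e : X.Adj x y), G.Walk (pathEnd e) (pathEnd e.symm)
  path_isPath : ∀ ⦃x y⦄ (e : X.Adj x y), (path e).IsPath
  path_symm : ∀ ⦃x y⦄ (e : X.Adj x y), path e.symm = (path e).reverse
  pathEnd_mem : ∀ ⦃x y⦄ (e : X.Adj x y), pathEnd e ∈ branch x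
  path_meets : ∀ ⦃x y⦄ (e : X.Adj x y) (z : W) (v : V), v ∈ (path e).support → v ∈ branch z →
    (z = x ∧ v = pathEnd e) ∨ (z = y ∧ v = pathEnd e.symm)
  path_int_disjoint : ∀ ⦃x y x' y'⦄ (e : X.Adj x y) (e' : X.Adj x' y'), s(x, y) ≠ s(x', y') →
    ∀ v, v ∈ (path e).support → v ∈ (path e').support → v = pathEnd e' ∨ v = pathEnd e'.symm
  fat_branch : ∀ ⦃x y⦄, x ≠ y → (K : ℕ∞) ≤ sDist G (branch x) (branch y)
  fat_path_branch : ∀ ⦃x y⦄ (e : X.Adj x y) (z : W), z ≠ x → z ≠ y →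
    (K : ℕ∞) ≤ sDist G (walkSupp (path e)) (branch z)
  fat_paths : ∀ ⦃x y x' y'⦄ (e : X.Adj x y) (e' : X.Adj x' y'), s(x, y) ≠ s(x', y') →
    (K : ℕ∞) ≤ sDist G (walkSupp (path e)) (walkSupp (path e'))

/-- `X` is a `K`-fat minor of `G`. -/
def IsFatMinor {V W : Type*} (G : SimpleGraph V) (X : SimpleGraph W) (K : ℕ) : Prop :=
  Nonempty (FatModel G X K)

/-- `W` is a `K`-fat `n`-path-connected set in `G`. -/
def FatPathConn {V : Type*} (G : SimpleGraph V) (K n : ℕ) (W : Set V) : Prop :=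
  (∃ S : Finset V, ↑S ⊆ W ∧ 2 * n ≤ S.card) ∧
  (∀ ⦃u v : V⦄, u ∈ W → v ∈ W → u ≠ v → (K : ℕ∞) ≤ G.edist u v) ∧
  ∀ l : ℕ, l ≤ n → ∀ A B : Finset V, ↑A ⊆ W → ↑B ⊆ W → A.card = l → B.card = l →
    ∃ (a b : Fin l → V) (P : ∀ i : Fin l, G.Walk (a i) (b i)),
      (∀ i, (P i).IsPath) ∧ (∀ i, a i ∈ A ∧ b i ∈ B) ∧
      ∀ i j, i ≠ j → (K : ℕ∞) ≤ sDist G (walkSupp (P i)) (walkSupp (P j))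

end CGT

namespace Ghdm

/-- Raw vertex codes for the graphs `G_{h,d,m}`:
`path k` is the `k`-th vertex of the base path; `tree j i p` is the vertex at position `p`
of the `i`-th binary tree at level `j` (the root being position `[]`); and
`spine j i k t e s` is the `s`-th internal vertex of the spine from the `k`-th leaf of that
tree to the `e`-th element of the `t`-th local gluing set at level `j-1`. -/
inductive Raw : Type where
  | path (k : ℕ)
  | tree (j i : ℕ) (p : List Bool)
  | spine (j i k t e s : ℕ)
deriving DecidableEq

/-- `N = 2^{h+1} - 1`, the number of copies of `G_{h,d,m-1}` glued inside `G_{h,d,m}`. -/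
def NN (h : ℕ) : ℕ := 2 ^ (h + 1) - 1

/-- Canonical representative of a raw vertex code: all tree roots are identified with the
single root `tree m 1 []`, and the leftmost leaf of tree `i > 1` is identified with the
rightmost leaf of tree `i - 1` (consecutive copies are glued along these leaves). -/
def canon (h m : ℕ) : Raw → Raw
  | .tree j i p =>
    if p = [] then .tree m 1 []
    else if p = List.replicate h false ∧ 1 < i then .tree j (i - 1) (List.replicate h true)
    else .tree j i p
  | x => x

/-- The `q`-bit binary representation of `i` (most significant bit first);
`false` means "left". -/
def natToBits (q i : ℕ) : List Bool := (List.range q).map fun a => Nat.testBit i (q - 1 - a)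

/-- Position of the `k`-th leaf (1-based, from the left) in a binary tree of height `h`. -/
def leafPos (h k : ℕ) : List Bool := natToBits h (k - 1)

/-- The `e`-th element of the `g`-th gluing set `V^{jv}_g` (at level `jv`):
its element `e = 1` is an anchor of the base path, and its element `e ≥ 2` is a shared
extreme leaf of the trees at level `e`. -/
def VsetElem (h d jv g e : ℕ) : Raw :=
  if e = 1 then .path ((g - 1) * NN h ^ (jv - 1) * (d + 1))
  else if (g - 1) * NN h ^ (jv - e) = 0 then .tree e 1 (List.replicate h false)
  else .tree e ((g - 1) * NN h ^ (jv - e)) (List.replicate h true)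

/-- Valid (canonical) vertex codes of `G_{h,d,m}`. -/
def Valid (h d m : ℕ) : Raw → Prop
  | .path k => k ≤ (d + 1) * NN h ^ (m - 1)
  | .tree j i p => 2 ≤ j ∧ j ≤ m ∧ 1 ≤ i ∧ i ≤ NN h ^ (m - j) ∧ p.length ≤ h ∧
      (p = [] → j = m ∧ i = 1) ∧ (p = List.replicate h false → p ≠ [] → i = 1)
  | .spine j i k t e s => 2 ≤ j ∧ j ≤ m ∧ 1 ≤ i ∧ i ≤ NN h ^ (m - j) ∧
      1 ≤ k ∧ k ≤ 2 ^ h ∧ (t = 2 * k - 2 ∨ t = 2 * k + 1) ∧ 1 ≤ t ∧ t ≤ 2 ^ (h + 1) ∧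
      1 ≤ e ∧ e ≤ j - 1 ∧ 1 ≤ s ∧ s ≤ d

/-- Generating adjacencies between raw vertex codes: consecutive base path vertices,
parent/child in the binary trees, consecutive spine vertices, a spine and the leaf it
starts at, a spine and the gluing-set vertex it ends at (the latter collapsed to a single
edge when `d = 0`). -/
inductive rawAdj (h d : ℕ) : Raw → Raw → Prop
  | base (k : ℕ) : rawAdj h d (.path k) (.path (k + 1))
  | child (j i : ℕ) (p : List Bool) (b : Bool) : p.length < h →
      rawAdj h d (.tree j i p) (.tree j i (p ++ [b]))
  | step (j i k t e s : ℕ) : rawAdj h d (.spine j i k t e s) (.spine j i k t e (s + 1))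
  | toLeaf (j i k t e : ℕ) : rawAdj h d (.tree j i (leafPos h k)) (.spine j i k t e 1)
  | toV (j i k t e : ℕ) :
      rawAdj h d (.spine j i k t e d) (VsetElem h d (j - 1) ((i - 1) * NN h + t) e)
  | short (j i k t e : ℕ) : d = 0 → 1 ≤ k → k ≤ 2 ^ h → (t = 2 * k - 2 ∨ t = 2 * k + 1) →
      1 ≤ t → t ≤ 2 ^ (h + 1) → 1 ≤ e → e ≤ j - 1 →
      rawAdj h d (.tree j i (leafPos h k)) (VsetElem h d (j - 1) ((i - 1) * NN h + t) e)

/-- Adjacency of canonical representatives. -/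
def rel (h d m : ℕ) (x y : Raw) : Prop :=
  ∃ a b, rawAdj h d a b ∧ x = canon h m a ∧ y = canon h m b

/-- The vertex set of `G_{h,d,m}`. -/
def Verts (h d m : ℕ) : Set Raw := {x | Valid h d m x}

/-- The graph `G_{h,d,m}`. -/
def G (h d m : ℕ) : SimpleGraph (Verts h d m) :=
  (SimpleGraph.fromRel (rel h d m)).induce (Verts h d m)

/-- Lift a set of raw codes to a set of vertices of `G_{h,d,m}`. -/
def lift {h d m : ℕ} (S : Set Raw) : Set (Verts h d m) := Subtype.val ⁻¹' S

/-- The root `R(G_{h,d,m})`. -/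
def RootR (m : ℕ) : Raw := .tree m 1 []

/-- The gluing set `V^{jv}_g` of `G_{h,d,m}`, as a set of raw codes. -/
def VsetRaw (h d m jv g : ℕ) : Set Raw :=
  {x | ∃ e, 1 ≤ e ∧ e ≤ jv ∧ x = canon h m (VsetElem h d jv g e)}

/-- The set `S(G_{h,d,m})`. -/
def SsetR (h d m : ℕ) : Set Raw :=
  VsetRaw h d m (m - 1) 1 ∪ {canon h m (.tree m 1 (leafPos h 1))}

/-- The set `T(G_{h,d,m})`. -/
def TsetR (h d m : ℕ) : Set Raw :=
  VsetRaw h d m (m - 1) (2 ^ (h + 1)) ∪ {canon h m (.tree m 1 (leafPos h (2 ^ h)))}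

/-- For a vertex of the top binary tree at position `p`, the (1-based) index of the
leftmost leaf of the top tree below it. -/
def kOf (h : ℕ) (p : List Bool) : ℕ :=
  (p.foldl (fun a b => 2 * a + if b then 1 else 0) 0) * 2 ^ (h - p.length) + 1

/-- `S(Δ(x))` for the vertex `x` of the top binary tree `B(G_{h,d,m})` at position `p`. -/
def SDeltaR (h d m : ℕ) (p : List Bool) : Set Raw :=
  VsetRaw h d m (m - 1) (2 * kOf h p - 1) ∪ {canon h m (.tree m 1 (leafPos h (kOf h p)))}

/-- The leaf of `B(G_{h,d,m})` immediately to the left of the leftmost leaf below the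
top-tree vertex at position `p`; it is the unique leaf joined by spines to `S(Δ(x))`. -/
def leafLeftR (h m : ℕ) (p : List Bool) : Raw :=
  canon h m (.tree m 1 (leafPos h (kOf h p - 1)))

end Ghdm

/-!
Given a walk `p` in `H` from `f y` to `f z`, choose for each vertex of `p` a vertex of `G` whose
image is within `A` of it. The images of two consecutive choices are within `2A + 1` of each other,
so the choices themselves are within `M(2A + 1) + MA = M(3A + 1)` in `G`. Joining consecutive
choices by geodesics gives a walk `q` in `G` from `y` to `z`, and `f` maps each vertex of `q`
to within `M²(3A + 1) + A` of the image of a choice, hence to within `M²(3A + 1) + 2A` of `p`.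
Since `q` meets `X`, the walk `p` meets the ball of that radius around `f(X)`.
-/

namespace CGT

section Graph

variable {V : Type*} {G : SimpleGraph V}

lemma gBall_subset_gBall {U : Set V} {r s : ℕ} (hrs : r ≤ s) : gBall G U r ⊆ gBall G U s :=
  fun _ ⟨u, hu, huv⟩ ↦ ⟨u, hu, huv.trans (by exact_mod_cast hrs)⟩

lemma gBall_mono {U U' : Set V} {r : ℕ} (hU : U ⊆ U') : gBall G U r ⊆ gBall G U' r :=
  fun _ ⟨u, hu, huv⟩ ↦ ⟨u, hU hu, huv⟩

lemma Separates.mono {X X' Y Z : Set V} (h : Separates G X Y Z) (hX : X ⊆ X') :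
    Separates G X' Y Z := fun _ _ hy hz p hp ↦
  let ⟨x, hx, hxp⟩ := h hy hz p hp
  ⟨x, hX hx, hxp⟩

lemma Separates.exists_mem_support {X Y Z : Set V} (h : Separates G X Y Z) {y z : V}
    (hy : y ∈ Y) (hz : z ∈ Z) (p : G.Walk y z) : ∃ x ∈ X, x ∈ p.support := by
  classical
  obtain ⟨x, hx, hxp⟩ := h hy hz p.bypass p.bypass_isPath
  exact ⟨x, hx, p.support_bypass_subset_support hxp⟩

lemma edist_le_length_of_mem_support {u v x : V} (p : G.Walk u v) (hx : x ∈ p.support) :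
    G.edist u x ≤ p.length := by
  classical
  exact (edist_le (p.takeUntil x hx)).trans (by exact_mod_cast p.length_takeUntil_le_length hx)

lemma exists_walk_forall_mem_support_edist_le {u v : V} {n : ℕ} (h : G.edist u v ≤ n) :
    ∃ p : G.Walk u v, ∀ x ∈ p.support, G.edist u x ≤ n := by
  obtain ⟨p, hp⟩ := exists_walk_of_edist_ne_top (ne_top_of_le_ne_top (ENat.natCast_ne_top n) h)
  exact ⟨p, fun x hx ↦ (edist_le_length_of_mem_support p hx).trans (hp.trans_le h)⟩

end Graph

namespace IsQI

variable {V V' : Type*} {M A : ℕ} {G : SimpleGraph V} {H : SimpleGraph V'} {f : V → V'}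

lemma exists_walk_edist_map_le (hf : IsQI M A G H f) {v v' : V} {n : ℕ}
    (h : H.edist (f v) (f v') ≤ n) :
    ∃ q : G.Walk v v', ∀ x ∈ q.support, H.edist (f v) (f x) ≤ (M ^ 2 * (n + A) + A : ℕ) := by
  have hvv' : G.edist v v' ≤ (M * n + M * A : ℕ) :=
    calc G.edist v v' ≤ M * H.edist (f v) (f v') + M * A := hf.lower v v'
      _ ≤ M * n + M * A := by gcongr
      _ = (M * n + M * A : ℕ) := by push_cast; rfl
  obtain ⟨q, hq⟩ := exists_walk_forall_mem_support_edist_le hvv'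
  refine ⟨q, fun x hx ↦ ?_⟩
  calc H.edist (f v) (f x) ≤ M * G.edist v x + A := hf.upper v x
    _ ≤ M * (M * n + M * A : ℕ) + A := by gcongr; exact hq x hx
    _ = (M ^ 2 * (n + A) + A : ℕ) := by push_cast; ring

lemma exists_walk_map_near_vertex (hf : IsQI M A G H f) {w w' : V'} {v v' : V}
    (hww' : H.edist w w' ≤ 1) (hv : H.edist w (f v) ≤ A) (hv' : H.edist w' (f v') ≤ A) :
    ∃ q : G.Walk v v', ∀ x ∈ q.support, H.edist w (f x) ≤ (M ^ 2 * (3 * A + 1) + 2 * A : ℕ) := by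
  have hfvv' : H.edist (f v) (f v') ≤ (2 * A + 1 : ℕ) :=
    calc H.edist (f v) (f v')
        ≤ H.edist (f v) w + (H.edist w w' + H.edist w' (f v')) :=
          SimpleGraph.edist_triangle.trans (by gcongr; exact SimpleGraph.edist_triangle)
      _ ≤ A + (1 + A) := by rw [edist_comm (u := f v)]; gcongr
      _ = (2 * A + 1 : ℕ) := by push_cast; ring
  obtain ⟨q, hq⟩ := hf.exists_walk_edist_map_le hfvv'
  refine ⟨q, fun x hx ↦ ?_⟩
  calc H.edist w (f x) ≤ H.edist w (f v) + H.edist (f v) (f x) := SimpleGraph.edist_triangle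
    _ ≤ A + (M ^ 2 * (2 * A + 1 + A) + A : ℕ) := by gcongr; exact hq x hx
    _ = (M ^ 2 * (3 * A + 1) + 2 * A : ℕ) := by push_cast; ring

lemma exists_walk_map_subset_gBall (hf : IsQI M A G H f) {w w' : V'} (p : H.Walk w w') {v v' : V}
    (hv : H.edist w (f v) ≤ A) (hv' : H.edist w' (f v') ≤ A) :
    ∃ q : G.Walk v v',
      f '' walkSupp q ⊆ gBall H (walkSupp p) (M ^ 2 * (3 * A + 1) + 2 * A) := by
  induction p generalizing v with
  | @nil w =>
    obtain ⟨q, hq⟩ := hf.exists_walk_map_near_vertex (by simp) hv hv'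
    exact ⟨q, Set.image_subset_iff.2 fun x hx ↦ ⟨w, Walk.start_mem_support _, hq x hx⟩⟩
  | @cons w b _ hwb p ih =>
    obtain ⟨t, ht⟩ := hf.dense b
    obtain ⟨q₁, hq₁⟩ := hf.exists_walk_map_near_vertex (edist_eq_one_iff_adj.2 hwb).le hv ht
    obtain ⟨q₂, hq₂⟩ := ih ht hv'
    refine ⟨q₁.append q₂, Set.image_subset_iff.2 fun x hx ↦ ?_⟩
    rcases (Walk.mem_support_append_iff q₁ q₂).1 hx with hx₁ | hx₂
    · exact ⟨w, Walk.start_mem_support _, hq₁ x hx₁⟩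
    · exact gBall_mono (fun u hu ↦ List.mem_cons_of_mem w hu) (hq₂ ⟨x, hx₂, rfl⟩)

end IsQI

end CGT

theorem statement3_general {V V' : Type*} {M A : ℕ} {G : SimpleGraph V} {H : SimpleGraph V'}
    {f : V → V'} (hf : CGT.IsQI M A G H f) {X Y Z : Set V} (hsep : CGT.Separates G X Y Z) :
    CGT.Separates H (CGT.gBall H (f '' X) (M ^ 2 * (3 * A + 1) + 2 * A)) (f '' Y) (f '' Z) := by
  rintro _ _ ⟨y, hy, rfl⟩ ⟨z, hz, rfl⟩ p _
  obtain ⟨q, hq⟩ := hf.exists_walk_map_subset_gBall p (v := y) (v' := z) (by simp) (by simp)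
  obtain ⟨x, hxX, hxq⟩ := hsep.exists_mem_support hy hz q
  obtain ⟨u, hup, hux⟩ := hq ⟨x, hxq, rfl⟩
  exact ⟨u, ⟨f x, ⟨x, hxX, rfl⟩, edist_comm.trans_le hux⟩, hup⟩

/-- quasi-isometries preserve separators, coarsely: with
`r := M²(3A+1) + 2A + M`, if `X` separates `Y` and `Z` in `G`, then the ball of radius
`r` around `f(X)` separates `f(Y)` and `f(Z)` in `H`. -/
theorem statement3 {V V' : Type*} (M A : ℕ) (hM : 1 ≤ M)
    (G : SimpleGraph V) (H : SimpleGraph V') (hG : G.Connected) (hH : H.Connected)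
    (f : V → V') (hf : CGT.IsQI M A G H f)
    (X Y Z : Set V) (hsep : CGT.Separates G X Y Z) :
    CGT.Separates H (CGT.gBall H (f '' X) (M ^ 2 * (3 * A + 1) + 2 * A + M))
      (f '' Y) (f '' Z) :=
  (statement3_general hf hsep).mono (CGT.gBall_subset_gBall (Nat.le_add_right _ _))
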